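/- Let α > 1, and for S_i → ∞, T_i with 0 ≤ S_i < T_i ≤ ∞ and S_i^α √(S_i^{−α+1} − T_i^{−α+1}) → ∞, let d_{S_i}^{T_i} be the length metric on ℝ³ induced by the conformal metric Φ_{S_i}^{T_i}·h₀ where Φ_S^T(ζ) = ∫_S^T dx/|ζ − (x^α,0,0)|. Then (ℝ³, d_{S_i}^{T_i}, 0) converges to (ℝ³, Euclidean metric, 0) in the pointed Gromov–Hausdorff topology. -/

import Mathlib

open MeasureTheory Set

noncomputable section

abbrev E3 := WithLp 2 (ℝ × ℂ)

def axPt (α x : ℝ) : E3 := (WithLp.equiv 2 (ℝ × ℂ)).symm (x ^ α, 0)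

def epow (T : EReal) (e : ℝ) : ℝ := if T = ⊤ then 0 else T.toReal ^ e

/-- The conformal factor `Φ_S^T(ζ) = ∫_S^T dx/|ζ - (x^α,0,0)|` (with `T ≤ ∞`). -/
def PhiST (α S : ℝ) (T : EReal) (ζ : E3) : ℝ :=
  (∫⁻ x in {x : ℝ | S < x ∧ (x : EReal) < T},
    ENNReal.ofReal (1 / ‖ζ - axPt α x‖)).toReal

/-- The length metric on `ℝ³` induced by the conformal metric `Φ·h₀`: the infimum of
`∫ √(Φ(γ))|γ'|` over `C¹` paths joining `x` and `y`. -/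
def confDist (Φ : E3 → ℝ) (x y : E3) : ℝ :=
  (⨅ γ : {γ : ℝ → E3 // ContDiff ℝ 1 γ ∧ γ 0 = x ∧ γ 1 = y},
    ∫⁻ t in Icc (0 : ℝ) 1,
      ENNReal.ofReal (Real.sqrt (Φ (γ.1 t)) * ‖deriv γ.1 t‖)).toReal

/-- `f` is an `(r,ε)`-isometry from `(ℝ³,d₁,0)` to `(ℝ³,d₂,0)`. -/
def IsPGHApprox (d₁ d₂ : E3 → E3 → ℝ) (r ε : ℝ) (f : E3 → E3) : Prop :=
  f 0 = 0 ∧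
  (∀ x y : E3, d₁ 0 x < r → d₁ 0 y < r → |d₁ x y - d₂ (f x) (f y)| < ε) ∧
  (∀ z : E3, d₂ 0 z < r - ε → ∃ x : E3, d₁ 0 x < r ∧ d₂ (f x) z < ε)

lemma norm_axPt (α x : ℝ) (hx : 0 ≤ x) : ‖axPt α x‖ = x ^ α := by
  have h : ‖axPt α x‖ ^ 2 = (x ^ α) ^ 2 := by
    rw [WithLp.prod_norm_sq_eq_of_L2]
    simp [axPt]
  have h0 : 0 ≤ x ^ α := Real.rpow_nonneg hx α
  nlinarith [norm_nonneg (axPt α x), sq_nonneg (‖axPt α x‖ - x ^ α), (pow_left_inj₀ (norm_nonneg (axPt α x)) h0 two_ne_zero).1 h]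

/-- domain of integration -/
def domA (S : ℝ) (T : EReal) : Set ℝ := {x : ℝ | S < x ∧ (x : EReal) < T}

/-- extended-valued conformal factor -/
def PhiE (α S : ℝ) (T : EReal) (ζ : E3) : ENNReal :=
  ∫⁻ x in domA S T, ENNReal.ofReal (1 / ‖ζ - axPt α x‖)

lemma PhiST_eq (α S : ℝ) (T : EReal) (ζ : E3) : PhiST α S T ζ = (PhiE α S T ζ).toReal := rfl

lemma domA_meas (S : ℝ) (T : EReal) : MeasurableSet (domA S T) := by
  apply MeasurableSet.inter
  · exact measurableSet_Ioi
  · exact measurableSet_lt measurable_coe_real_ereal measurable_const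

lemma PhiE_zero (α S : ℝ) (T : EReal) (hS : 0 < S) :
    PhiE α S T 0 = ∫⁻ x in domA S T, ENNReal.ofReal (x ^ (-α)) := by
  unfold PhiE
  apply setLIntegral_congr_fun (domA_meas S T)
  intro x hx
  have hx0 : 0 < x := hS.trans hx.1
  simp only [zero_sub, norm_neg, norm_axPt α x hx0.le, Real.rpow_neg hx0.le, one_div]

lemma PhiE_zero_val (α S : ℝ) (T : EReal) (hα : 1 < α) (hS : 0 < S) (hST : (S : EReal) < T) :
    PhiE α S T 0 = ENNReal.ofReal ((S ^ (1 - α) - epow T (1 - α)) / (α - 1)) := by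
  rw [PhiE_zero α S T hS]
  have hint : IntegrableOn (fun x : ℝ => x ^ (-α)) (Ioi S) :=
    integrableOn_Ioi_rpow_of_lt (by linarith) hS
  have hsub : domA S T ⊆ Ioi S := fun x hx => hx.1
  rw [← ofReal_integral_eq_lintegral_ofReal (hint.mono_set hsub)]
  · congr 1
    induction T using EReal.rec with
    | bot => simp at hST
    | top =>
      have : domA S ⊤ = Ioi S := by ext x; simp [domA]
      rw [this, integral_Ioi_rpow_of_lt (by linarith) hS]
      simp only [epow, if_true]
      rw [show -α + 1 = -(α - 1) by ring, show 1 - α = -(α - 1) by ring]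
      have : α - 1 ≠ 0 := by linarith
      field_simp
      ring
    | coe t =>
      have hSt : S < t := by exact_mod_cast hST
      have : domA S t = Ioo S t := by ext x; simp [domA]
      rw [this, ← integral_Ioc_eq_integral_Ioo, ← intervalIntegral.integral_of_le hSt.le,
        integral_rpow]
      · simp only [epow, EReal.coe_ne_top, if_false, EReal.toReal_coe]
        rw [show -α + 1 = -(α - 1) by ring, show 1 - α = -(α - 1) by ring]
        have : α - 1 ≠ 0 := by linarith
        field_simp
        ring
      · right
        refine ⟨by linarith, ?_⟩
        rw [Set.uIcc_of_le hSt.le]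
        intro h
        linarith [h.1]
  · filter_upwards [ae_restrict_mem (domA_meas S T)] with x hx
    exact Real.rpow_nonneg (hS.trans hx.1).le _

lemma PhiE_upper (α S : ℝ) (T : EReal) (hα : 1 < α) (hS : 0 < S) (δ : ℝ) (hδ1 : δ < 1)
    (ζ : E3) (hζ : ‖ζ‖ ≤ δ * S ^ α) :
    PhiE α S T ζ ≤ ENNReal.ofReal (1 / (1 - δ)) * PhiE α S T 0 := by
  unfold PhiE
  rw [← lintegral_const_mul' _ _ ENNReal.ofReal_ne_top]
  apply setLIntegral_mono' (domA_meas S T)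
  intro x hx
  have hx0 : 0 < x := hS.trans hx.1
  have hSx : S ^ α ≤ x ^ α := Real.rpow_le_rpow hS.le hx.1.le (by linarith)
  have hp : 0 < S ^ α := Real.rpow_pos_of_pos hS α
  have h1 : 0 < 1 - δ := by linarith
  rw [← ENNReal.ofReal_mul (by positivity)]
  apply ENNReal.ofReal_le_ofReal
  simp only [zero_sub, norm_neg]
  have hn := norm_axPt α x hx0.le
  have h2 : ‖axPt α x‖ - ‖ζ‖ ≤ ‖ζ - axPt α x‖ := by
    rw [norm_sub_rev]; exact norm_sub_norm_le _ _
  have hδ0 : 0 ≤ δ := by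
    by_contra h
    push Not at h
    nlinarith [norm_nonneg ζ]
  have h3 : (1 - δ) * ‖axPt α x‖ ≤ ‖ζ - axPt α x‖ := by
    rw [hn] at *
    nlinarith
  rw [one_div_mul_one_div]
  apply one_div_le_one_div_of_le _ h3
  rw [hn]
  positivity

lemma PhiE_lower (α S : ℝ) (T : EReal) (hα : 1 < α) (hS : 0 < S) (δ : ℝ) (hδ0 : 0 ≤ δ) (hδ1 : δ < 1)
    (ζ : E3) (hζ : ‖ζ‖ ≤ δ * S ^ α) :
    ENNReal.ofReal (1 / (1 + δ)) * PhiE α S T 0 ≤ PhiE α S T ζ := by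
  unfold PhiE
  rw [← lintegral_const_mul' _ _ ENNReal.ofReal_ne_top]
  apply setLIntegral_mono' (domA_meas S T)
  intro x hx
  have hx0 : 0 < x := hS.trans hx.1
  have hSx : S ^ α ≤ x ^ α := Real.rpow_le_rpow hS.le hx.1.le (by linarith)
  have hp : 0 < S ^ α := Real.rpow_pos_of_pos hS α
  rw [← ENNReal.ofReal_mul (by positivity)]
  apply ENNReal.ofReal_le_ofReal
  simp only [zero_sub, norm_neg]
  have hn := norm_axPt α x hx0.le
  have h2 : ‖axPt α x‖ - ‖ζ‖ ≤ ‖ζ - axPt α x‖ := by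
    rw [norm_sub_rev]; exact norm_sub_norm_le _ _
  have h2' : ‖ζ - axPt α x‖ ≤ ‖ζ‖ + ‖axPt α x‖ := norm_sub_le _ _
  rw [one_div_mul_one_div]
  apply one_div_le_one_div_of_le
  · rw [hn] at h2
    nlinarith
  · rw [hn] at *
    nlinarith

lemma sqrt_bounds (α S : ℝ) (T : EReal) (hα : 1 < α) (hS : 0 < S) (hST : (S : EReal) < T)
    (δ : ℝ) (hδ0 : 0 ≤ δ) (hδ1 : δ < 1) (ζ : E3) (hζ : ‖ζ‖ ≤ δ * S ^ α) :
    √(PhiST α S T 0) / (1 + δ) ≤ √(PhiST α S T ζ) ∧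
    √(PhiST α S T ζ) ≤ √(PhiST α S T 0) / (1 - δ) := by
  have hf : PhiE α S T 0 ≠ ⊤ := by
    rw [PhiE_zero_val α S T hα hS hST]; exact ENNReal.ofReal_ne_top
  have hu := PhiE_upper α S T hα hS δ hδ1 ζ hζ
  have hl := PhiE_lower α S T hα hS δ hδ0 hδ1 ζ hζ
  have hf' : ENNReal.ofReal (1 / (1 - δ)) * PhiE α S T 0 ≠ ⊤ :=
    ENNReal.mul_ne_top ENNReal.ofReal_ne_top hf
  have hfz : PhiE α S T ζ ≠ ⊤ := ne_top_of_le_ne_top hf' hu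
  have hu' := ENNReal.toReal_mono hf' hu
  have hl' := ENNReal.toReal_mono hfz hl
  have h1 : 0 < 1 - δ := by linarith
  have h2 : 0 < 1 + δ := by linarith
  rw [ENNReal.toReal_mul, ENNReal.toReal_ofReal (by positivity)] at hu' hl'
  simp only [PhiST_eq]
  set p := (PhiE α S T 0).toReal
  set q := (PhiE α S T ζ).toReal
  have hp : 0 ≤ p := ENNReal.toReal_nonneg
  constructor
  · apply Real.le_sqrt_of_sq_le
    rw [div_pow, Real.sq_sqrt hp]
    refine le_trans ?_ hl'
    rw [one_div, mul_comm, ← div_eq_mul_inv]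
    apply div_le_div_of_nonneg_left hp h2
    nlinarith
  · rw [Real.sqrt_le_left (by positivity), div_pow, Real.sq_sqrt hp]
    refine le_trans hu' ?_
    rw [one_div, mul_comm, ← div_eq_mul_inv]
    apply div_le_div_of_nonneg_left hp (by positivity)
    nlinarith

/-- length of a path -/
def plen (Φ : E3 → ℝ) (γ : ℝ → E3) : ENNReal :=
  ∫⁻ t in Icc (0 : ℝ) 1, ENNReal.ofReal (Real.sqrt (Φ (γ t)) * ‖deriv γ t‖)

lemma plen_lower (Φ : E3 → ℝ) (γ : ℝ → E3) (hγ : ContDiff ℝ 1 γ) (b c : ℝ) (hb0 : 0 ≤ b)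
    (hb1 : b ≤ 1) (hc : 0 ≤ c) (h : ∀ t ∈ Ioo 0 b, c ≤ √(Φ (γ t))) :
    ENNReal.ofReal (c * ‖γ b - γ 0‖) ≤ plen Φ γ := by
  have hd : Continuous (deriv γ) := hγ.continuous_deriv le_rfl
  have hFTC : ∫ t in (0:ℝ)..b, deriv γ t = γ b - γ 0 := by
    apply intervalIntegral.integral_deriv_eq_sub
    · intro x _
      exact (hγ.differentiable one_ne_zero) x
    · exact hd.intervalIntegrable _ _
  rw [← hFTC, intervalIntegral.integral_of_le hb0, integral_Ioc_eq_integral_Ioo,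
    ENNReal.ofReal_mul hc, ofReal_norm_eq_enorm]
  calc ENNReal.ofReal c * ‖∫ t in Ioo 0 b, deriv γ t‖ₑ
      ≤ ENNReal.ofReal c * ∫⁻ t in Ioo 0 b, ‖deriv γ t‖ₑ := by
        gcongr; exact enorm_integral_le_lintegral_enorm _
    _ = ∫⁻ t in Ioo 0 b, ENNReal.ofReal c * ‖deriv γ t‖ₑ := by
        rw [lintegral_const_mul' _ _ ENNReal.ofReal_ne_top]
    _ ≤ ∫⁻ t in Ioo 0 b, ENNReal.ofReal (Real.sqrt (Φ (γ t)) * ‖deriv γ t‖) := by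
        apply setLIntegral_mono' measurableSet_Ioo
        intro t ht
        rw [ENNReal.ofReal_mul (Real.sqrt_nonneg _), ofReal_norm_eq_enorm]
        gcongr
        exact h t ht
    _ ≤ plen Φ γ := by
        apply lintegral_mono_set
        intro t ht
        exact ⟨ht.1.le, ht.2.le.trans hb1⟩

lemma plen_lower_ball (Φ : E3 → ℝ) (γ : ℝ → E3) (hγ : ContDiff ℝ 1 γ) (ρ c : ℝ)
    (hc : 0 ≤ c) (h : ∀ ζ, ‖ζ‖ ≤ ρ → c ≤ √(Φ ζ)) :
    ENNReal.ofReal (c * min ‖γ 1 - γ 0‖ (ρ - ‖γ 0‖)) ≤ plen Φ γ := by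
  by_cases hall : ∀ t ∈ Icc (0:ℝ) 1, ‖γ t‖ ≤ ρ
  · refine le_trans ?_ (plen_lower Φ γ hγ 1 c zero_le_one le_rfl hc
      (fun t ht => h _ (hall t ⟨ht.1.le, ht.2.le⟩)))
    apply ENNReal.ofReal_le_ofReal
    gcongr
    exact min_le_left _ _
  · push Not at hall
    obtain ⟨t₀, ht₀, hlt⟩ := hall
    have hK : IsCompact (Icc (0:ℝ) 1 ∩ {t | ρ ≤ ‖γ t‖}) :=
      isCompact_Icc.inter_right (isClosed_le continuous_const hγ.continuous.norm)
    obtain ⟨τ, hτ, hmin⟩ := hK.exists_isLeast ⟨t₀, ht₀, hlt.le⟩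
    refine le_trans ?_ (plen_lower Φ γ hγ τ c hτ.1.1 hτ.1.2 hc ?_)
    · apply ENNReal.ofReal_le_ofReal
      gcongr
      refine (min_le_right _ _).trans ?_
      have := norm_sub_norm_le (γ τ) (γ 0)
      have h2 : ρ ≤ ‖γ τ‖ := hτ.2
      linarith
    · intro t ht
      apply h
      by_contra hcon
      push Not at hcon
      have := hmin ⟨⟨ht.1.le, ht.2.le.trans hτ.1.2⟩, hcon.le⟩
      linarith [ht.2]

/-- extended distance -/
def eConf (Φ : E3 → ℝ) (x y : E3) : ENNReal :=
  ⨅ γ : {γ : ℝ → E3 // ContDiff ℝ 1 γ ∧ γ 0 = x ∧ γ 1 = y}, plen Φ γ.1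

lemma confDist_eq (Φ : E3 → ℝ) (x y : E3) : confDist Φ x y = (eConf Φ x y).toReal := rfl

lemma eConf_lower (Φ : E3 → ℝ) (x y : E3) (ρ c : ℝ)
    (hc : 0 ≤ c) (h : ∀ ζ, ‖ζ‖ ≤ ρ → c ≤ √(Φ ζ)) :
    ENNReal.ofReal (c * min ‖y - x‖ (ρ - ‖x‖)) ≤ eConf Φ x y := by
  apply le_iInf
  rintro ⟨γ, hγ, rfl, rfl⟩
  exact plen_lower_ball Φ γ hγ ρ c hc h

lemma eConf_upper (Φ : E3 → ℝ) (x y : E3) (ρ c : ℝ) (hx : ‖x‖ ≤ ρ) (hy : ‖y‖ ≤ ρ)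
    (h : ∀ ζ, ‖ζ‖ ≤ ρ → √(Φ ζ) ≤ c) :
    eConf Φ x y ≤ ENNReal.ofReal (c * ‖y - x‖) := by
  have hcd : ContDiff ℝ 1 (fun t : ℝ => x + t • (y - x)) := by fun_prop
  refine (iInf_le _ ⟨fun t : ℝ => x + t • (y - x), hcd, by simp, by simp⟩).trans ?_
  have hder : ∀ t : ℝ, deriv (fun t : ℝ => x + t • (y - x)) t = y - x := by
    intro t
    have : HasDerivAt (fun t : ℝ => x + t • (y - x)) ((1:ℝ) • (y - x)) t :=
      ((hasDerivAt_id t).smul_const (y - x)).const_add x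
    rw [this.deriv, one_smul]
  unfold plen
  calc _ ≤ ∫⁻ t in Icc (0:ℝ) 1, ENNReal.ofReal (c * ‖y - x‖) := by
        apply setLIntegral_mono' measurableSet_Icc
        intro t ht
        rw [hder]
        apply ENNReal.ofReal_le_ofReal
        gcongr
        apply h
        have := (convex_closedBall (0:E3) ρ).add_smul_sub_mem (x := x) (y := y)
          (by simpa using hx) (by simpa using hy) ht
        simpa using this
    _ = _ := by simp

/-- crude bound -/
lemma PhiE_crude (α S : ℝ) (T : EReal) (hα : 1 < α) (hS : 0 < S) (M : ℝ) (hM : 0 < M) (m : ℝ)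
    (hm : 0 < m) (ζ : E3) (hζ : ‖ζ‖ ≤ M) (hζm : m ≤ ‖ζ.snd‖) :
    PhiE α S T ζ ≤ ENNReal.ofReal 2 * PhiE α S T 0 +
      ENNReal.ofReal ((2 * M) ^ (1 / α) * (1 / m)) := by
  have hdom : ∀ x ∈ domA S T, ENNReal.ofReal (1 / ‖ζ - axPt α x‖) ≤
      ENNReal.ofReal 2 * ENNReal.ofReal (1 / ‖0 - axPt α x‖) +
      (Icc 0 ((2 * M) ^ (1 / α))).indicator (fun _ => ENNReal.ofReal (1 / m)) x := by
    intro x hx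
    have hx0 : 0 < x := hS.trans hx.1
    have hn := norm_axPt α x hx0.le
    have hxp : 0 < x ^ α := Real.rpow_pos_of_pos hx0 α
    by_cases hX : x ≤ (2 * M) ^ (1 / α)
    · rw [indicator_of_mem (show x ∈ Icc 0 ((2 * M) ^ (1 / α)) from ⟨hx0.le, hX⟩)]
      refine le_trans ?_ le_add_self
      apply ENNReal.ofReal_le_ofReal
      apply one_div_le_one_div_of_le hm
      have h1 : ‖(ζ - axPt α x).snd‖ ≤ ‖ζ - axPt α x‖ := WithLp.norm_snd_le (p := 2) ..
      have h2 : (ζ - axPt α x).snd = ζ.snd := by simp [axPt]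
      rw [h2] at h1
      exact hζm.trans h1
    · push Not at hX
      refine le_trans ?_ le_self_add
      rw [← ENNReal.ofReal_mul (by norm_num)]
      apply ENNReal.ofReal_le_ofReal
      have h3 : 2 * M ≤ x ^ α := by
        have := Real.rpow_le_rpow (by positivity) hX.le (show 0 ≤ α by linarith)
        rwa [← Real.rpow_mul (by positivity), one_div_mul_cancel (by linarith), Real.rpow_one]
          at this
      have h2 : ‖axPt α x‖ - ‖ζ‖ ≤ ‖ζ - axPt α x‖ := by
        rw [norm_sub_rev]; exact norm_sub_norm_le _ _
      simp only [zero_sub, norm_neg]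
      rw [hn] at *
      rw [show 2 * (1 / x ^ α) = 1 / (x ^ α / 2) by field_simp]
      apply one_div_le_one_div_of_le (by positivity)
      linarith
  unfold PhiE
  refine (setLIntegral_mono' (domA_meas S T) hdom).trans ?_
  rw [lintegral_add_right _ (measurable_const.indicator measurableSet_Icc),
    lintegral_const_mul' _ _ ENNReal.ofReal_ne_top]
  gcongr
  refine (setLIntegral_le_lintegral _ _).trans ?_
  rw [lintegral_indicator_const measurableSet_Icc, Real.volume_Icc, sub_zero,
    ENNReal.ofReal_mul (by positivity), mul_comm]

lemma eConf_finite (α S : ℝ) (T : EReal) (hα : 1 < α) (hS : 0 < S) (hST : (S : EReal) < T)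
    (x : E3) : eConf (PhiST α S T) 0 x ≠ ⊤ := by
  obtain ⟨v, hv, hxv⟩ : ∃ v : ℂ, ‖v‖ = 1 ∧ x.snd = (‖x.snd‖ : ℂ) * v := by
    by_cases h : x.snd = 0
    · exact ⟨1, by simp, by simp [h]⟩
    · refine ⟨x.snd / ‖x.snd‖, ?_, ?_⟩
      · simp [h]
      · have : (‖x.snd‖ : ℂ) ≠ 0 := by simpa using h
        field_simp
  set e : E3 := WithLp.toLp 2 ((0 : ℝ), v) with he
  have hen : ‖e‖ = 1 := by
    have : ‖e‖ ^ 2 = 1 := by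
      rw [WithLp.prod_norm_sq_eq_of_L2]; simp [he, hv]
    exact (pow_eq_one_iff_of_nonneg (norm_nonneg e) two_ne_zero).1 this
  set γ : ℝ → E3 := fun t => t • x + (t * (1 - t)) • e with hγ
  have hcd : ContDiff ℝ 1 γ := by fun_prop
  refine ne_top_of_le_ne_top ?_ (iInf_le _ ⟨γ, hcd, by simp [hγ], by simp [hγ]⟩)
  have hdc : Continuous (deriv γ) := hcd.continuous_deriv le_rfl
  obtain ⟨D, hD⟩ := (isCompact_Icc (a := (0:ℝ)) (b := 1)).exists_bound_of_continuousOn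
    hdc.continuousOn
  have hf : PhiE α S T 0 ≠ ⊤ := by
    rw [PhiE_zero_val α S T hα hS hST]; exact ENNReal.ofReal_ne_top
  set M : ℝ := ‖x‖ + 1 with hMdef
  have hM : 0 < M := by positivity
  set X : ℝ := (2 * M) ^ (1 / α) with hX
  have hXp : 0 < X := by positivity
  set p := (PhiE α S T 0).toReal with hp
  have hp0 : 0 ≤ p := ENNReal.toReal_nonneg
  have hΦ : ∀ t ∈ Ioo (0:ℝ) 1, √(PhiST α S T (γ t)) ≤
      √(2 * p) + √X * (t ^ (-(1/2) : ℝ) + (1 - t) ^ (-(1/2) : ℝ)) := by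
    intro t ht
    have ht0 := ht.1
    have ht1 : 0 < 1 - t := by linarith [ht.2]
    have hn : ‖γ t‖ ≤ M := by
      refine (norm_add_le _ _).trans ?_
      rw [norm_smul, norm_smul, hen, Real.norm_of_nonneg ht0.le,
        Real.norm_of_nonneg (by positivity)]
      nlinarith [norm_nonneg x, ht.2]
    have hs : t * (1 - t) ≤ ‖(γ t).snd‖ := by
      have : (γ t).snd = ((t * ‖x.snd‖ + t * (1 - t) : ℝ) : ℂ) * v := by
        have : (γ t).snd = (t : ℂ) * x.snd + ((t * (1 - t) : ℝ) : ℂ) * v := by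
          simp [hγ, he]
        rw [this]
        conv_lhs => rw [hxv]
        push_cast
        ring
      rw [this, norm_mul, hv, mul_one, Complex.norm_real, Real.norm_of_nonneg (by positivity)]
      have : 0 ≤ t * ‖x.snd‖ := by positivity
      linarith
    have hc := PhiE_crude α S T hα hS M hM (t * (1 - t)) (by positivity) (γ t) hn hs
    have hc' := ENNReal.toReal_mono (by finiteness) hc
    rw [ENNReal.toReal_add (by finiteness) (by finiteness), ENNReal.toReal_mul,
      ENNReal.toReal_ofReal (by norm_num), ENNReal.toReal_ofReal (by positivity),
      ← PhiST_eq, ← hp, ← hX] at hc'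
    have e1 : ∀ s : ℝ, 0 < s → s ^ (-(1/2) : ℝ) = √(1 / s) := by
      intro s hs
      rw [Real.rpow_neg hs.le, ← Real.sqrt_eq_rpow, one_div, Real.sqrt_inv]
    rw [e1 t ht0, e1 _ ht1]
    have e2 : X * (1 / (t * (1 - t))) = X * (1 / t + 1 / (1 - t)) := by
      field_simp
      ring
    have hadd : ∀ a b : ℝ, 0 ≤ a → 0 ≤ b → √(a + b) ≤ √a + √b := by
      intro a b ha hb
      rw [Real.sqrt_le_left (by positivity)]
      nlinarith [Real.sq_sqrt ha, Real.sq_sqrt hb, Real.sqrt_nonneg a, Real.sqrt_nonneg b,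
        mul_nonneg (Real.sqrt_nonneg a) (Real.sqrt_nonneg b)]
    calc √(PhiST α S T (γ t)) ≤ √(2 * p + X * (1 / t + 1 / (1 - t))) := by
          apply Real.sqrt_le_sqrt
          rw [← e2]; exact hc'
      _ ≤ √(2 * p) + √(X * (1 / t + 1 / (1 - t))) := hadd _ _ (by positivity) (by positivity)
      _ = √(2 * p) + √X * √(1 / t + 1 / (1 - t)) := by rw [Real.sqrt_mul hXp.le]
      _ ≤ _ := by
          gcongr
          exact hadd _ _ (by positivity) (by positivity)
  have hint1 : IntervalIntegrable (fun t : ℝ => t ^ (-(1/2) : ℝ)) volume 0 1 :=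
    intervalIntegral.intervalIntegrable_rpow' (by norm_num)
  have hint2 : IntervalIntegrable (fun t : ℝ => (1 - t) ^ (-(1/2) : ℝ)) volume 0 1 := by
    have := (hint1.comp_sub_left 1).symm
    simpa using this
  have hint : IntervalIntegrable (fun t : ℝ => (√(2 * p) +
      √X * (t ^ (-(1/2) : ℝ) + (1 - t) ^ (-(1/2) : ℝ))) * D) volume 0 1 :=
    ((intervalIntegrable_const).add ((hint1.add hint2).const_mul _)).mul_const _
  rw [intervalIntegrable_iff_integrableOn_Ioo_of_le zero_le_one] at hint
  refine ne_top_of_le_ne_top hint.lintegral_lt_top.ne ?_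
  unfold plen
  rw [setLIntegral_congr Ioo_ae_eq_Icc.symm]
  apply setLIntegral_mono' measurableSet_Ioo
  intro t ht
  apply ENNReal.ofReal_le_ofReal
  have h1 := hΦ t ht
  have h2 := hD t ⟨ht.1.le, ht.2.le⟩
  exact mul_le_mul h1 h2 (norm_nonneg _) ((Real.sqrt_nonneg _).trans h1)


/-- If `S_i → ∞` and `S_i^α √(S_i^{1-α} - T_i^{1-α}) → ∞`, then
`(ℝ³, d_{S_i}^{T_i}, 0)` converges to Euclidean `(ℝ³, h₀, 0)` in the pointed
Gromov–Hausdorff sense (existence of `(r,ε)`-isometries for all `r, ε`). -/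
theorem stmt17 (α : ℝ) (hα : 1 < α) (S : ℕ → ℝ) (T : ℕ → EReal)
    (hST : ∀ i, 0 ≤ S i ∧ (S i : EReal) < T i)
    (hS : Filter.Tendsto S Filter.atTop Filter.atTop)
    (hbig : Filter.Tendsto
      (fun i => S i ^ α * Real.sqrt (S i ^ (1 - α) - epow (T i) (1 - α)))
      Filter.atTop Filter.atTop) :
    ∀ r > (0 : ℝ), ∀ ε > (0 : ℝ), ∃ N : ℕ, ∀ i ≥ N, ∃ f : E3 → E3,
      IsPGHApprox (confDist (PhiST α (S i) (T i))) (fun x y => dist x y) r ε f := by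
  intro r hr ε hε
  obtain ⟨δ, hδ0, hδ1, hδε⟩ : ∃ δ : ℝ, 0 < δ ∧ δ ≤ 1 / 2 ∧ 8 * r * δ < ε := by
    refine ⟨min (1 / 2) (ε / (16 * r)), by positivity, min_le_left _ _, ?_⟩
    calc 8 * r * min (1 / 2) (ε / (16 * r)) ≤ 8 * r * (ε / (16 * r)) := by
          gcongr; exact min_le_right _ _
      _ = ε / 2 := by field_simp; norm_num
      _ < ε := by linarith
  have hα1 : 0 < α - 1 := by linarith
  have h1 := hS.eventually_gt_atTop 0
  have h2 := hbig.eventually_ge_atTop (8 * r / δ * √(α - 1))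
  obtain ⟨N, hN⟩ := Filter.eventually_atTop.1 (h1.and h2)
  refine ⟨N, fun i hi => ?_⟩
  obtain ⟨hSi, hbi⟩ := hN i hi
  have hSTi := (hST i).2
  generalize hs : S i = s at *
  generalize ht : T i = T at *
  set lam := √(PhiST α s T 0) with hlam
  have hval : lam = √(s ^ (1 - α) - epow T (1 - α)) / √(α - 1) := by
    rw [hlam, PhiST_eq, PhiE_zero_val α s T hα hSi hSTi, ENNReal.toReal_ofReal',
      ← Real.sqrt_div' _ hα1.le]
    rcases le_total 0 ((s ^ (1 - α) - epow T (1 - α)) / (α - 1)) with h | h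
    · rw [max_eq_left h]
    · rw [max_eq_right h, Real.sqrt_eq_zero_of_nonpos h, Real.sqrt_zero]
  have hsα : 0 < s ^ α := Real.rpow_pos_of_pos hSi α
  have hsq : 0 < √(α - 1) := Real.sqrt_pos.2 hα1
  have hbig' : 8 * r ≤ lam * (δ * s ^ α) := by
    rw [hval]
    have : 8 * r / δ * √(α - 1) * δ ≤ s ^ α * √(s ^ (1 - α) - epow T (1 - α)) * δ := by gcongr
    rw [div_mul_eq_mul_div, div_mul_cancel₀ _ hδ0.ne'] at this
    rw [div_mul_eq_mul_div, le_div_iff₀ hsq]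
    linarith
  set ρ := δ * s ^ α with hρ
  have hρ0 : 0 < ρ := by positivity
  have hlam0 : 0 < lam := by
    by_contra h
    push Not at h
    nlinarith
  have hb := fun ζ hζ => sqrt_bounds α s T hα hSi hSTi δ hδ0.le (by linarith) ζ hζ
  have hd1 : 0 < 1 - δ := by linarith
  have hlow := fun x y => eConf_lower (PhiST α s T) x y ρ (lam / (1 + δ)) (by positivity)
    (fun ζ hζ => (hb ζ hζ).1)
  have hup := fun x y hx hy => eConf_upper (PhiST α s T) x y ρ (lam / (1 - δ)) hx hy
    (fun ζ hζ => (hb ζ hζ).2)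
  have hrho_of : ∀ x : E3, lam * ‖x‖ ≤ 8 * r → ‖x‖ ≤ ρ := by
    intro x hx
    exact le_of_mul_le_mul_left (hx.trans hbig') hlam0
  have hfac1 : lam / (1 - δ) ≤ lam * (1 + 2 * δ) := by
    rw [div_le_iff₀ hd1]
    nlinarith [mul_pos hlam0 hδ0]
  have hfac2 : lam * (1 - δ) ≤ lam / (1 + δ) := by
    rw [le_div_iff₀ (by positivity)]
    nlinarith [mul_pos hlam0 hδ0]
  have hupR : ∀ x y : E3, ‖x‖ ≤ ρ → ‖y‖ ≤ ρ →
      confDist (PhiST α s T) x y ≤ (1 + 2 * δ) * (lam * ‖y - x‖) := by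
    intro x y hx hy
    rw [confDist_eq]
    refine (ENNReal.toReal_le_of_le_ofReal (by positivity) (hup x y hx hy)).trans ?_
    calc _ ≤ lam * (1 + 2 * δ) * ‖y - x‖ := by gcongr
      _ = _ := by ring
  have hball : ∀ x : E3, confDist (PhiST α s T) 0 x < r → lam * ‖x‖ < 2 * r := by
    intro x hx
    have hfin := eConf_finite α s T hα hSi hSTi x
    have h3 := (ENNReal.ofReal_le_iff_le_toReal hfin).1 (hlow 0 x)
    rw [← confDist_eq, sub_zero, norm_zero, sub_zero] at h3
    have h4 : lam / (1 + δ) * min ‖x‖ ρ < r := h3.trans_lt hx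
    have h5 : lam * min ‖x‖ ρ < 2 * r := by
      rw [div_mul_eq_mul_div, div_lt_iff₀ (by positivity)] at h4
      nlinarith
    rcases min_cases ‖x‖ ρ with ⟨h, _⟩ | ⟨h, _⟩ <;> rw [h] at h5
    · exact h5
    · linarith
  refine ⟨fun x => lam • x, by simp, ?_, ?_⟩
  · intro x y hx hy
    have hx' := hball x hx
    have hy' := hball y hy
    have hxρ := hrho_of x (by linarith)
    have hyρ := hrho_of y (by linarith)
    have hu := hupR x y hxρ hyρ
    have hfin : eConf (PhiST α s T) x y ≠ ⊤ :=
      ne_top_of_le_ne_top ENNReal.ofReal_ne_top (hup x y hxρ hyρ)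
    have hl := (ENNReal.ofReal_le_iff_le_toReal hfin).1 (hlow x y)
    rw [← confDist_eq] at hl
    have hxy : ‖y - x‖ ≤ ‖y‖ + ‖x‖ := norm_sub_le _ _
    have hlxy : lam * ‖y - x‖ ≤ 4 * r := by nlinarith
    have hmin : min ‖y - x‖ (ρ - ‖x‖) = ‖y - x‖ := by
      apply min_eq_left
      apply le_of_mul_le_mul_left _ hlam0
      nlinarith
    rw [hmin] at hl
    have hl' : lam * (1 - δ) * ‖y - x‖ ≤ confDist (PhiST α s T) x y :=
      le_trans (by gcongr) hl
    have hdist : dist (lam • x) (lam • y) = lam * ‖y - x‖ := by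
      rw [dist_comm, dist_eq_norm, ← smul_sub, norm_smul, Real.norm_of_nonneg hlam0.le]
    simp only [hdist]
    have hδl : δ * (lam * ‖y - x‖) ≤ δ * (4 * r) := by gcongr
    rw [abs_lt]
    constructor <;> nlinarith
  · intro z hz
    simp only [dist_zero_left] at hz
    refine ⟨lam⁻¹ • z, ?_, ?_⟩
    · have hn : lam * ‖lam⁻¹ • z‖ = ‖z‖ := by
        rw [norm_smul, Real.norm_of_nonneg (by positivity)]
        field_simp
      have := hupR 0 (lam⁻¹ • z) (by simpa using hρ0.le) (hrho_of _ (by rw [hn]; linarith))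
      rw [sub_zero, hn] at this
      have h6 : δ * ‖z‖ ≤ δ * r := by gcongr; linarith
      nlinarith
    · simp only [smul_inv_smul₀ hlam0.ne', dist_self]
      exact hε
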